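/- Let {u_n} ⊂ H³(ℝ²) converge weakly in H³(ℝ²) to u_∞. Then lim_{n→∞} ‖u_n − u_∞‖_{W^{1,∞}(ℝ²)} = 0 holds if and only if u_n(· − j_n) ⇀ 0 weakly in H³(ℝ²) for every sequence {j_n} ⊂ ℤ² with |j_n| → ∞. -/

import Mathlib

open Filter MeasureTheory Complex

/-- The `H³` Fourier weight `(1+|k|²)³`. -/
noncomputable def H3weight (k : ℝ × ℝ) : ℝ := (1 + k.1 ^ 2 + k.2 ^ 2) ^ 3

/-- The character `e^{2πik·x}` appearing in the inverse Fourier transform. -/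
noncomputable def fchar (x k : ℝ × ℝ) : ℂ :=
  Complex.exp (2 * Real.pi * Complex.I * ((k.1 : ℂ) * (x.1 : ℂ) + (k.2 : ℂ) * (x.2 : ℂ)))

/-- The `W^{1,∞}(ℝ²)` norm of the function with Fourier transform `w`: the sup over `x` of
the modulus of the function and of its two first-order partial derivatives, all expressed
as inverse Fourier integrals. -/
noncomputable def W1inftyNorm (w : ℝ × ℝ → ℂ) : ℝ :=
  ⨆ x : ℝ × ℝ,
    (‖∫ k : ℝ × ℝ, fchar x k * w k‖ +
      ‖∫ k : ℝ × ℝ, (2 * Real.pi * Complex.I * (k.1 : ℂ)) * fchar x k * w k‖ +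
      ‖∫ k : ℝ × ℝ, (2 * Real.pi * Complex.I * (k.2 : ℂ)) * fchar x k * w k‖)

theorem aux_norm_fchar (x k : ℝ × ℝ) : ‖fchar x k‖ = 1 := by
  have : (2 * Real.pi * Complex.I * ((k.1 : ℂ) * (x.1 : ℂ) + (k.2 : ℂ) * (x.2 : ℂ)) : ℂ)
      = ((2 * Real.pi * (k.1 * x.1 + k.2 * x.2) : ℝ) : ℂ) * Complex.I := by
    push_cast; ring
  rw [fchar, this, Complex.norm_exp_ofReal_mul_I]

theorem aux_fchar_add (x y k : ℝ × ℝ) : fchar (x + y) k = fchar x k * fchar y k := by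
  rw [fchar, fchar, fchar, ← Complex.exp_add]
  congr 1
  simp only [Prod.fst_add, Prod.snd_add]
  push_cast; ring

theorem aux_conj_fchar (x k : ℝ × ℝ) : starRingEnd ℂ (fchar x k) = fchar (-x) k := by
  rw [fchar, fchar, ← Complex.exp_conj]
  congr 1
  simp only [map_mul, map_add, Complex.conj_ofReal, Complex.conj_I, Prod.fst_neg, Prod.snd_neg,
    Complex.ofReal_neg, Complex.conj_ofNat]
  ring

theorem aux_fchar_neg_mul (x k : ℝ × ℝ) : fchar (-x) k * fchar x k = 1 := by
  rw [← aux_fchar_add]; simp [fchar]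

theorem aux_fchar_cont : Continuous (fun p : (ℝ × ℝ) × (ℝ × ℝ) => fchar p.1 p.2) := by
  unfold fchar; fun_prop

theorem aux_fchar_meas (x : ℝ × ℝ) : Measurable (fchar x) := by
  have : Continuous (fchar x) := by unfold fchar; fun_prop
  exact this.measurable

theorem aux_RL (f : ℝ × ℝ → ℂ) (j : ℕ → ℤ × ℤ)
    (hj : Tendsto (fun n => |(j n).1| + |(j n).2|) atTop atTop) :
    Tendsto (fun n => ∫ k : ℝ × ℝ, fchar (-(((j n).1 : ℝ), ((j n).2 : ℝ))) k * f k) atTop (nhds 0) := by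
  let L : ℕ → StrongDual ℝ (ℝ × ℝ) := fun n =>
    ((j n).1 : ℝ) • ContinuousLinearMap.fst ℝ ℝ ℝ + ((j n).2 : ℝ) • ContinuousLinearMap.snd ℝ ℝ ℝ
  have hL : Tendsto L atTop (cocompact (StrongDual ℝ (ℝ × ℝ))) := by
    rw [← Metric.cobounded_eq_cocompact, ← tendsto_norm_atTop_iff_cobounded]
    have h1 : Tendsto (fun n => ((|(j n).1| + |(j n).2| : ℤ) : ℝ) / 2) atTop atTop :=
      (tendsto_intCast_atTop_atTop.comp hj).atTop_div_const two_pos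
    refine tendsto_atTop_mono (fun n => ?_) h1
    have a := (L n).le_opNorm (1, 0)
    have b := (L n).le_opNorm (0, 1)
    simp [L, Prod.norm_def] at a b
    push_cast
    simp only [L]
    linarith
  have := (tendsto_integral_exp_smul_cocompact f (volume : Measure (ℝ × ℝ))).comp hL
  refine this.congr (fun n => ?_)
  simp only [Function.comp]
  congr 1
  ext k
  rw [Circle.smul_def, Real.fourierChar_apply, fchar, smul_eq_mul]
  congr 2
  simp [L]; ring

theorem aux_inj_real (r : ℝ × ℝ → ℝ) (hr : Integrable r)
    (h : ∀ x, ∫ k, fchar x k * (r k : ℂ) = 0) : r =ᵐ[volume] 0 := by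
  have : IsFiniteMeasure (volume.withDensity fun k => ENNReal.ofReal (r k)) :=
    isFiniteMeasure_withDensity_ofReal hr.2
  have : IsFiniteMeasure (volume.withDensity fun k => ENNReal.ofReal (-r k)) :=
    isFiniteMeasure_withDensity_ofReal hr.neg.2
  have m1 : AEMeasurable (fun k => ENNReal.ofReal (r k)) := hr.aemeasurable.ennreal_ofReal
  have m2 : AEMeasurable (fun k => ENNReal.ofReal (-r k)) := hr.aemeasurable.neg.ennreal_ofReal
  have key : (volume.withDensity fun k => ENNReal.ofReal (r k))
      = (volume.withDensity fun k => ENNReal.ofReal (-r k)) := by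
    apply Measure.ext_of_charFunDual
    ext L
    rw [charFunDual_apply, charFunDual_apply,
      integral_withDensity_eq_integral_toReal_smul₀ m1 (by simp),
      integral_withDensity_eq_integral_toReal_smul₀ m2 (by simp), ← sub_eq_zero, ← integral_sub]
    · rw [← h (L (1, 0) / (2 * Real.pi), L (0, 1) / (2 * Real.pi))]
      congr 1
      ext k
      have e : L k = k.1 * L (1, 0) + k.2 * L (0, 1) := by
        have : k = k.1 • ((1 : ℝ), (0 : ℝ)) + k.2 • ((0 : ℝ), (1 : ℝ)) := by ext <;> simp
        conv_lhs => rw [this]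
        rw [map_add, map_smul, map_smul]; simp
      have e2 : (r k : ℂ) = ((ENNReal.ofReal (r k)).toReal - (ENNReal.ofReal (-r k)).toReal : ℝ) := by
        rw [ENNReal.toReal_ofReal', ENNReal.toReal_ofReal']
        congr 1
        rcases le_total 0 (r k) with h | h <;> simp [h]
      rw [e2, ← sub_smul, Complex.real_smul, mul_comm, fchar]
      congr 2
      rw [e]
      have : (Real.pi : ℂ) ≠ 0 := by exact_mod_cast Real.pi_ne_zero
      push_cast
      field_simp
    · refine (hr.pos_part).mono (m1.ennreal_toReal.aestronglyMeasurable.smul (by fun_prop)) (Eventually.of_forall fun k => ?_)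
      rw [norm_smul, Complex.norm_exp_ofReal_mul_I, mul_one, ENNReal.toReal_ofReal']
    · refine (hr.neg_part).mono (m2.ennreal_toReal.aestronglyMeasurable.smul (by fun_prop)) (Eventually.of_forall fun k => ?_)
      rw [norm_smul, Complex.norm_exp_ofReal_mul_I, mul_one, ENNReal.toReal_ofReal']
  have := (withDensity_eq_iff m1 m2 (ne_of_lt (Integrable.lintegral_lt_top hr))).1 key
  filter_upwards [this] with k hk
  have := congrArg ENNReal.toReal hk
  rw [ENNReal.toReal_ofReal', ENNReal.toReal_ofReal'] at this
  rcases le_total 0 (r k) with h | h <;> simp [h] at this <;> simpa using this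

theorem aux_inj (f : ℝ × ℝ → ℂ) (hf : Integrable f)
    (h : ∀ x, ∫ k, fchar x k * f k = 0) : f =ᵐ[volume] 0 := by
  have hi : ∀ g : ℝ × ℝ → ℂ, Integrable g → ∀ x, Integrable (fun k => fchar x k * g k) :=
    fun g hg x => hg.bdd_mul (c := 1) (aux_fchar_meas x).aestronglyMeasurable
      (Eventually.of_forall fun k => (aux_norm_fchar x k).le)
  have hc : Integrable (fun k => starRingEnd ℂ (f k)) := by
    refine hf.mono ?_ (Eventually.of_forall fun k => by simp)
    exact Complex.continuous_conj.comp_aestronglyMeasurable hf.1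
  have h' : ∀ x, ∫ k, fchar x k * starRingEnd ℂ (f k) = 0 := by
    intro x
    have := congrArg (starRingEnd ℂ) (h (-x))
    rw [← integral_conj] at this
    simpa [aux_conj_fchar] using this
  have h1 : (fun k => (f k).re) =ᵐ[volume] 0 := by
    apply aux_inj_real _ hf.re
    intro x
    have : ∀ k, fchar x k * ((f k).re : ℂ)
      = (1/2 : ℂ) * (fchar x k * f k) + (1/2 : ℂ) * (fchar x k * starRingEnd ℂ (f k)) := by
      intro k
      rw [Complex.re_eq_add_conj]; ring
    refine (integral_congr_ae (Eventually.of_forall this)).trans ?_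
    rw [integral_add ((hi _ hf x).const_mul _) ((hi _ hc x).const_mul _),
      integral_const_mul, integral_const_mul, h, h']
    simp
  have h2 : (fun k => (f k).im) =ᵐ[volume] 0 := by
    apply aux_inj_real _ hf.im
    intro x
    have : ∀ k, fchar x k * ((f k).im : ℂ)
      = (1/(2*Complex.I) : ℂ) * (fchar x k * f k) - (1/(2*Complex.I) : ℂ) * (fchar x k * starRingEnd ℂ (f k)) := by
      intro k
      rw [Complex.im_eq_sub_conj]; ring
    refine (integral_congr_ae (Eventually.of_forall this)).trans ?_
    rw [integral_sub ((hi _ hf x).const_mul _) ((hi _ hc x).const_mul _),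
      integral_const_mul, integral_const_mul, h, h']
    simp
  filter_upwards [h1, h2] with k a b
  exact Complex.ext a b

theorem aux_inner {f g : ℝ × ℝ → ℂ} (hf : MemLp f 2 volume) (hg : MemLp g 2 volume) :
    inner ℂ (hg.toLp g) (hf.toLp f) = ∫ k, f k * starRingEnd ℂ (g k) := by
  rw [L2.inner_def]
  refine integral_congr_ae ?_
  filter_upwards [hf.coeFn_toLp, hg.coeFn_toLp] with k a b
  rw [a, b, RCLike.inner_apply]

theorem aux_normsq {f : ℝ × ℝ → ℂ} (hf : MemLp f 2 volume) :
    ‖hf.toLp f‖ ^ 2 = ∫ k, ‖f k‖ ^ 2 := by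
  have h := inner_self_eq_norm_sq_to_K (𝕜 := ℂ) (hf.toLp f)
  rw [aux_inner] at h
  have h2 : ∀ k, f k * starRingEnd ℂ (f k) = ((‖f k‖ ^ 2 : ℝ) : ℂ) := by
    intro k; rw [Complex.mul_conj']; push_cast; rfl
  simp_rw [h2] at h
  rw [integral_complex_ofReal] at h
  exact Complex.ofReal_injective (by simpa using h.symm)

theorem aux_memTL {f : ℝ × ℝ → ℂ} (hf : MemLp f 2 volume) (x : ℝ × ℝ) :
    MemLp (fun k => fchar x k * f k) 2 volume :=
  hf.of_le ((aux_fchar_meas x).aestronglyMeasurable.mul hf.1)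
    (Eventually.of_forall fun k => by rw [norm_mul, aux_norm_fchar, one_mul])

/-- The translate (in Fourier variables) as an element of `L²`. -/
noncomputable def TL {f : ℝ × ℝ → ℂ} (hf : MemLp f 2 volume) (x : ℝ × ℝ) :
    Lp ℂ 2 (volume : Measure (ℝ × ℝ)) := (aux_memTL hf x).toLp _

theorem aux_norm_TL {f : ℝ × ℝ → ℂ} (hf : MemLp f 2 volume) (x : ℝ × ℝ) :
    ‖TL hf x‖ = ‖hf.toLp f‖ := by
  have : ‖TL hf x‖ ^ 2 = ‖hf.toLp f‖ ^ 2 := by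
    rw [TL, aux_normsq, aux_normsq]
    simp [aux_norm_fchar]
  exact (sq_eq_sq₀ (norm_nonneg _) (norm_nonneg _)).1 this

theorem aux_inner_TL {f g : ℝ × ℝ → ℂ} (hf : MemLp f 2 volume) (hg : MemLp g 2 volume)
    (x y : ℝ × ℝ) :
    inner ℂ (TL hg y) (TL hf x) = ∫ k, fchar (x - y) k * (f k * starRingEnd ℂ (g k)) := by
  rw [TL, TL, aux_inner]
  congr 1
  ext k
  rw [map_mul, aux_conj_fchar, sub_eq_add_neg, aux_fchar_add]
  ring

theorem aux_cont_TL {f : ℝ × ℝ → ℂ} (hf : MemLp f 2 volume) : Continuous (TL hf) := by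
  rw [continuous_iff_continuousAt]
  intro y0
  rw [ContinuousAt, tendsto_iff_norm_sub_tendsto_zero]
  have hsq : Tendsto (fun y => ‖TL hf y - TL hf y0‖ ^ 2) (nhds y0) (nhds 0) := by
    have e : ∀ y, ‖TL hf y - TL hf y0‖ ^ 2 = ∫ k, ‖fchar y k * f k - fchar y0 k * f k‖ ^ 2 := by
      intro y
      rw [TL, TL, ← MemLp.toLp_sub, aux_normsq]
      rfl
    simp_rw [e]
    have : (0 : ℝ) = ∫ k, ‖fchar y0 k * f k - fchar y0 k * f k‖ ^ 2 := by simp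
    rw [this]
    refine tendsto_integral_filter_of_dominated_convergence (fun k => 4 * ‖f k‖ ^ 2) ?_ ?_ ?_ ?_
    · refine Eventually.of_forall fun y => ?_
      exact (((aux_memTL hf y).1.sub (aux_memTL hf y0).1).norm).pow 2
    · refine Eventually.of_forall fun y => Eventually.of_forall fun k => ?_
      have : ‖fchar y k * f k - fchar y0 k * f k‖ ≤ 2 * ‖f k‖ := by
        refine (norm_sub_le _ _).trans ?_
        rw [norm_mul, norm_mul, aux_norm_fchar, aux_norm_fchar]; linarith
      rw [Real.norm_of_nonneg (by positivity)]
      nlinarith [norm_nonneg (fchar y k * f k - fchar y0 k * f k)]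
    · exact ((memLp_two_iff_integrable_sq_norm hf.1).1 hf).const_mul 4
    · refine Eventually.of_forall fun k => ?_
      have : Continuous (fun y => ‖fchar y k * f k - fchar y0 k * f k‖ ^ 2) := by
        unfold fchar; fun_prop
      exact this.tendsto y0
  have := hsq.sqrt
  simpa using this

theorem aux_dense {g : ℝ × ℝ → ℂ} (hg : MemLp g 2 volume) (h0 : ∀ k, g k ≠ 0)
    (V : Lp ℂ 2 (volume : Measure (ℝ × ℝ))) (hV : ∀ y, inner ℂ (TL hg y) V = 0) : V = 0 := by
  have hVm := Lp.memLp V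
  have e : TL hVm 0 = V := by
    apply Lp.ext
    filter_upwards [(aux_memTL hVm 0).coeFn_toLp] with k hk
    rw [TL, hk]; simp [fchar]
  have hint : Integrable (fun k => V k * starRingEnd ℂ (g k)) :=
    hVm.integrable_mul hg.star
  have := aux_inj _ hint (by
    intro x
    have := hV (-x)
    rw [← e, aux_inner_TL] at this
    simpa using this)
  apply Lp.ext
  filter_upwards [this, Lp.coeFn_zero ℂ 2 (volume : Measure (ℝ × ℝ))] with k hk h
  rw [h]
  simpa [h0 k] using hk

theorem aux_weak_dense {E ι : Type*} [NormedAddCommGroup E] [InnerProductSpace ℂ E]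
    [CompleteSpace E] (S : ι → E) (hS : ∀ V, (∀ i, inner ℂ (S i) V = 0) → V = 0)
    (Z : ℕ → E) (C : ℝ) (hC : ∀ n, ‖Z n‖ ≤ C)
    (h : ∀ i, Tendsto (fun n => inner ℂ (S i) (Z n)) atTop (nhds 0)) (V : E) :
    Tendsto (fun n => inner ℂ V (Z n)) atTop (nhds 0) := by
  have hC0 : 0 ≤ C := (norm_nonneg _).trans (hC 0)
  have hspan : ∀ V ∈ Submodule.span ℂ (Set.range S),
      Tendsto (fun n => inner ℂ V (Z n)) atTop (nhds 0) := by
    intro V hV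
    induction hV using Submodule.span_induction with
    | mem x hx => obtain ⟨i, rfl⟩ := hx; exact h i
    | zero => simp
    | add x y _ _ hx hy => simpa [inner_add_left] using hx.add hy
    | smul a x _ hx => simpa [inner_smul_left] using hx.mul_const (starRingEnd ℂ a)
  have hd : (Submodule.span ℂ (Set.range S)).topologicalClosure = ⊤ := by
    rw [Submodule.topologicalClosure_eq_top_iff, Submodule.eq_bot_iff]
    intro x hx
    apply hS
    intro i
    exact hx _ (Submodule.subset_span ⟨i, rfl⟩)
  have hV : V ∈ closure (Submodule.span ℂ (Set.range S) : Set E) := by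
    rw [← Submodule.topologicalClosure_coe, hd]; trivial
  rw [Metric.tendsto_nhds]
  intro ε hε
  obtain ⟨U, hU, hUV⟩ := Metric.mem_closure_iff.1 hV (ε / (2 * (C + 1))) (by positivity)
  filter_upwards [Metric.tendsto_nhds.1 (hspan U hU) (ε / 2) (by positivity)] with n hn
  rw [dist_zero_right] at hn ⊢
  have e : inner ℂ V (Z n) = inner ℂ (V - U) (Z n) + inner ℂ U (Z n) := by
    rw [← inner_add_left]; simp
  have h1 : ‖inner ℂ (V - U) (Z n)‖ ≤ ε / 2 := by
    refine (norm_inner_le_norm _ _).trans ?_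
    rw [dist_eq_norm] at hUV
    calc ‖V - U‖ * ‖Z n‖ ≤ (ε / (2 * (C + 1))) * (C + 1) := by
          gcongr
          linarith [hC n]
      _ = ε / 2 := by field_simp
  rw [e]
  linarith [norm_add_le (inner ℂ (V - U) (Z n)) (inner ℂ U (Z n))]

theorem aux_weak_compact {E : Type*} [NormedAddCommGroup E] [InnerProductSpace ℂ E]
    (Z : ℕ → E) (C : ℝ) (hC : ∀ n, ‖Z n‖ ≤ C)
    (h : ∀ V, Tendsto (fun n => inner ℂ V (Z n)) atTop (nhds 0))
    (K : Set E) (hK : IsCompact K) (V : ℕ → E) (hV : ∀ n, V n ∈ K) :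
    Tendsto (fun n => inner ℂ (V n) (Z n)) atTop (nhds 0) := by
  have hC0 : 0 ≤ C := (norm_nonneg _).trans (hC 0)
  rw [Metric.tendsto_nhds]
  intro ε hε
  obtain ⟨t, -, htf, hcov⟩ := hK.finite_cover_balls (e := ε / (2 * (C + 1))) (by positivity)
  have hall : ∀ᶠ n in atTop, ∀ U ∈ t, dist (inner ℂ U (Z n)) 0 < ε / 2 :=
    (htf.eventually_all).2 fun U _ => Metric.tendsto_nhds.1 (h U) (ε / 2) (by positivity)
  filter_upwards [hall] with n hn
  obtain ⟨U, hU, hUV⟩ := Set.mem_iUnion₂.1 (hcov (hV n))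
  have hn := hn U hU
  rw [dist_zero_right] at hn ⊢
  have e : inner ℂ (V n) (Z n) = inner ℂ (V n - U) (Z n) + inner ℂ U (Z n) := by
    rw [← inner_add_left]; simp
  have h1 : ‖inner ℂ (V n - U) (Z n)‖ ≤ ε / 2 := by
    refine (norm_inner_le_norm _ _).trans ?_
    rw [Metric.mem_ball, dist_eq_norm] at hUV
    calc ‖V n - U‖ * ‖Z n‖ ≤ (ε / (2 * (C + 1))) * (C + 1) := by
          gcongr
          linarith [hC n]
      _ = ε / 2 := by field_simp
  rw [e]
  linarith [norm_add_le (inner ℂ (V n - U) (Z n)) (inner ℂ U (Z n))]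

theorem aux_comb (a : ℕ → ℤ × ℤ → ℂ)
    (hA : ∀ j : ℕ → ℤ × ℤ, Tendsto (fun n => |(j n).1| + |(j n).2|) atTop atTop →
      Tendsto (fun n => a n (j n)) atTop (nhds 0))
    (hB : ∀ i, Tendsto (fun n => a n i) atTop (nhds 0)) (j : ℕ → ℤ × ℤ) :
    Tendsto (fun n => a n (j n)) atTop (nhds 0) := by
  classical
  rw [Metric.tendsto_nhds]
  intro ε hε
  by_contra hcon
  rw [not_eventually] at hcon
  let j' : ℕ → ℤ × ℤ := fun n => if dist (a n (j n)) 0 < ε then ((n : ℤ), 0) else j n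
  by_cases ht : Tendsto (fun n => |(j' n).1| + |(j' n).2|) atTop atTop
  · have h1 := Metric.tendsto_nhds.1 (hA j' ht) ε hε
    obtain ⟨n, hn1, hn2⟩ := (hcon.and_eventually h1).exists
    simp only [j', if_neg hn1] at hn2
    exact hn1 hn2
  · rw [tendsto_atTop] at ht
    push Not at ht
    obtain ⟨R, hR⟩ := ht
    have hfin : (Set.Icc (-R) R ×ˢ Set.Icc (-R) R : Set (ℤ × ℤ)).Finite :=
      (Set.finite_Icc _ _).prod (Set.finite_Icc _ _)
    have hall : ∀ᶠ n in atTop, ∀ i ∈ (Set.Icc (-R) R ×ˢ Set.Icc (-R) R : Set (ℤ × ℤ)),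
        dist (a n i) 0 < ε :=
      (hfin.eventually_all).2 fun i _ => Metric.tendsto_nhds.1 (hB i) ε hε
    have hge := eventually_ge_atTop R.toNat
    obtain ⟨n, hn1, hn2, hn3⟩ := (hR.and_eventually (hall.and hge)).exists
    by_cases hd : dist (a n (j n)) 0 < ε
    · simp only [j', if_pos hd] at hn1
      have : (R : ℤ) ≤ n := Int.toNat_le.1 hn3
      simp at hn1
      omega
    · simp only [j', if_neg hd] at hn1
      apply hd
      apply hn2
      have h1 := abs_nonneg (j n).1
      have h2 := abs_nonneg (j n).2
      have h3 := abs_le.1 (show |(j n).1| ≤ R by linarith)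
      have h4 := abs_le.1 (show |(j n).2| ≤ R by linarith)
      exact ⟨h3, h4⟩

theorem aux_W_pos (k : ℝ × ℝ) : 0 < H3weight k := by unfold H3weight; positivity

theorem aux_W_cont : Continuous H3weight := by unfold H3weight; fun_prop

/-- Square root of the weight, as a complex number. -/
noncomputable def sW (k : ℝ × ℝ) : ℂ := ((Real.sqrt (H3weight k) : ℝ) : ℂ)

theorem aux_sW_ne (k : ℝ × ℝ) : sW k ≠ 0 := by
  unfold sW
  exact_mod_cast (Real.sqrt_pos.2 (aux_W_pos k)).ne'

theorem aux_sW_conj (k : ℝ × ℝ) : starRingEnd ℂ (sW k) = sW k := Complex.conj_ofReal _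

theorem aux_sW_sq (k : ℝ × ℝ) : sW k * sW k = (H3weight k : ℂ) := by
  unfold sW
  rw [← Complex.ofReal_mul, Real.mul_self_sqrt (aux_W_pos k).le]

theorem aux_sW_norm (k : ℝ × ℝ) : ‖sW k‖ ^ 2 = H3weight k := by
  rw [sW, Complex.norm_real, Real.norm_of_nonneg (Real.sqrt_nonneg _),
    Real.sq_sqrt (aux_W_pos k).le]

theorem aux_sW_meas : Measurable sW := by
  have : Continuous sW := by
    have := aux_W_cont
    unfold sW; fun_prop
  exact this.measurable

theorem aux_memH {f : ℝ × ℝ → ℂ} (hm : Measurable f)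
    (hf : Integrable (fun k : ℝ × ℝ => H3weight k * ‖f k‖ ^ 2)) :
    MemLp (fun k => sW k * f k) 2 volume := by
  have hmm : Measurable (fun k => sW k * f k) := aux_sW_meas.mul hm
  rw [memLp_two_iff_integrable_sq_norm hmm.aestronglyMeasurable]
  refine hf.congr (Eventually.of_forall fun k => ?_)
  simp only [norm_mul, mul_pow, aux_sW_norm]

theorem aux_exists_v (V : Lp ℂ 2 (volume : Measure (ℝ × ℝ))) :
    ∃ v : ℝ × ℝ → ℂ, ∃ _ : Measurable v,
      ∃ _ : Integrable (fun k : ℝ × ℝ => H3weight k * ‖v k‖ ^ 2),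
      ∃ hv : MemLp (fun k => sW k * v k) 2 volume, TL hv 0 = V := by
  have hVm := Lp.memLp V
  have hmeas : Measurable (V : ℝ × ℝ → ℂ) := (Lp.stronglyMeasurable V).measurable
  have e : ∀ k, sW k * (V k / sW k) = V k := fun k => mul_div_cancel₀ _ (aux_sW_ne k)
  have hmv : Measurable (fun k => V k / sW k) := hmeas.div aux_sW_meas
  have hi : Integrable (fun k : ℝ × ℝ => H3weight k * ‖V k / sW k‖ ^ 2) := by
    refine ((memLp_two_iff_integrable_sq_norm hVm.1).1 hVm).congr
      (Eventually.of_forall fun k => ?_)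
    simp only
    rw [← aux_sW_norm, ← mul_pow, ← norm_mul, e]
  refine ⟨fun k => V k / sW k, hmv, hi, aux_memH hmv hi, ?_⟩
  apply Lp.ext
  filter_upwards [(aux_memTL (aux_memH hmv hi) 0).coeFn_toLp] with k hk
  rw [TL, hk, e]; simp [fchar]

theorem aux_int_base : Integrable (fun k : ℝ × ℝ => ((1 + k.1 ^ 2 + k.2 ^ 2) ^ 2)⁻¹) := by
  have h := integrable_rpow_neg_one_add_norm_sq (E := ℝ × ℝ) (μ := volume) (r := 4)
    (by simp; norm_num)
  refine h.mono' ?_ (Eventually.of_forall fun k => ?_)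
  · apply Continuous.aestronglyMeasurable
    refine Continuous.inv₀ (by fun_prop) (fun k => by positivity)
  · rw [Real.norm_of_nonneg (by positivity), show (-4 / 2 : ℝ) = -(2 : ℕ) by norm_num,
      Real.rpow_neg (by positivity), Real.rpow_natCast]
    refine inv_anti₀ (by positivity) (pow_le_pow_left₀ (by positivity) ?_ 2)
    rw [Prod.norm_def]
    rcases max_cases ‖k.1‖ ‖k.2‖ with ⟨h, -⟩ | ⟨h, -⟩ <;> rw [h] <;>
      simp only [Real.norm_eq_abs, sq_abs] <;> nlinarith [sq_nonneg k.1, sq_nonneg k.2]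

theorem aux_memM {m : ℝ × ℝ → ℂ} (hm : Measurable m) (C : ℝ)
    (hC : ∀ k, ‖m k‖ ^ 2 ≤ C * (1 + k.1 ^ 2 + k.2 ^ 2)) :
    MemLp (fun k => starRingEnd ℂ (m k) / sW k) 2 volume := by
  have hmm : Measurable (fun k => starRingEnd ℂ (m k) / sW k) :=
    (Complex.continuous_conj.measurable.comp hm).div aux_sW_meas
  rw [memLp_two_iff_integrable_sq_norm hmm.aestronglyMeasurable]
  refine (aux_int_base.const_mul C).mono' (hmm.norm.pow_const 2).aestronglyMeasurable
    (Eventually.of_forall fun k => ?_)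
  rw [Real.norm_of_nonneg (by positivity), norm_div, div_pow, aux_sW_norm, RCLike.norm_conj,
    H3weight, div_le_iff₀ (by positivity)]
  refine (hC k).trans (le_of_eq ?_)
  have : 1 + k.1 ^ 2 + k.2 ^ 2 ≠ 0 := by positivity
  field_simp

theorem aux_pair_M {m f : ℝ × ℝ → ℂ}
    (hm : MemLp (fun k => starRingEnd ℂ (m k) / sW k) 2 volume)
    (hf : MemLp (fun k => sW k * f k) 2 volume) (x y : ℝ × ℝ) :
    ∫ k, m k * fchar x k * f k = inner ℂ (TL hm (-y)) (TL hf (x - y)) := by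
  rw [aux_inner_TL]
  congr 1
  ext k
  rw [sub_neg_eq_add, sub_add_cancel, map_div₀, aux_sW_conj, Complex.conj_conj]
  have := aux_sW_ne k
  field_simp

theorem aux_pair {f v : ℝ × ℝ → ℂ}
    (hf : MemLp (fun k => sW k * f k) 2 volume)
    (hv : MemLp (fun k => sW k * v k) 2 volume) (x : ℝ × ℝ) :
    ∫ k, (H3weight k : ℂ) * ((fchar x k * f k) * starRingEnd ℂ (v k))
      = inner ℂ (TL hv 0) (TL hf x) := by
  rw [aux_inner_TL]
  congr 1
  ext k
  rw [sub_zero, map_mul, aux_sW_conj, ← aux_sW_sq]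
  ring

theorem aux_TL_sub {f g : ℝ × ℝ → ℂ}
    (hf : MemLp (fun k => sW k * f k) 2 volume) (hg : MemLp (fun k => sW k * g k) 2 volume)
    (hfg : MemLp (fun k => sW k * (f k - g k)) 2 volume) (x : ℝ × ℝ) :
    TL hfg x = TL hf x - TL hg x := by
  rw [TL, TL, TL, ← MemLp.toLp_sub]
  congr 1
  ext k
  simp only [Pi.sub_apply]
  ring

theorem aux_shift {f g : ℝ × ℝ → ℂ} (hf : MemLp f 2 volume) (hg : MemLp g 2 volume)
    (x : ℝ × ℝ) : inner ℂ (TL hg (-x)) (TL hf 0) = inner ℂ (TL hg 0) (TL hf x) := by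
  rw [aux_inner_TL, aux_inner_TL]; simp

/-- (Remark `sup remark`.)  Let `u_n ⇀ u_∞` weakly in `H³(ℝ²)`
(everything being expressed in Fourier variables, `w n = û_n` and `w∞ = û_∞`, with the
`H³` weight `(1+|k|²)³`).  Then `‖u_n − u_∞‖_{W^{1,∞}} → 0` if and only if
`u_n(· − j_n) ⇀ 0` in `H³(ℝ²)` for every sequence `{j_n} ⊂ ℤ²` with `|j_n| → ∞`; on the
Fourier side the translate `u_n(· − j)` has transform `e^{−2πik·j} û_n(k)`. -/
theorem W1infty_convergence_iff_translates_vanish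
    (w : ℕ → ℝ × ℝ → ℂ) (winf : ℝ × ℝ → ℂ)
    (hmeas : ∀ n, Measurable (w n)) (hmeasinf : Measurable winf)
    (hH3 : ∀ n, Integrable (fun k : ℝ × ℝ => H3weight k * ‖w n k‖ ^ 2))
    (hH3inf : Integrable (fun k : ℝ × ℝ => H3weight k * ‖winf k‖ ^ 2))
    (hbdd : ∃ M : ℝ, ∀ n, (∫ k : ℝ × ℝ, H3weight k * ‖w n k‖ ^ 2) ≤ M)
    -- weak convergence `u_n ⇀ u_∞` in `H³(ℝ²)`
    (hweak : ∀ v : ℝ × ℝ → ℂ, Measurable v →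
      Integrable (fun k : ℝ × ℝ => H3weight k * ‖v k‖ ^ 2) →
      Tendsto (fun n => ∫ k : ℝ × ℝ, (H3weight k : ℂ) * (w n k * starRingEnd ℂ (v k)))
        atTop
        (nhds (∫ k : ℝ × ℝ, (H3weight k : ℂ) * (winf k * starRingEnd ℂ (v k))))) :
    Tendsto (fun n => W1inftyNorm (fun k => w n k - winf k)) atTop (nhds 0) ↔
      ∀ j : ℕ → ℤ × ℤ,
        Tendsto (fun n => |(j n).1| + |(j n).2|) atTop atTop →
        ∀ v : ℝ × ℝ → ℂ, Measurable v →
          Integrable (fun k : ℝ × ℝ => H3weight k * ‖v k‖ ^ 2) →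
          Tendsto (fun n => ∫ k : ℝ × ℝ, (H3weight k : ℂ) *
              ((Complex.exp (-(2 * Real.pi * Complex.I) *
                  ((k.1 : ℂ) * ((j n).1 : ℂ) + (k.2 : ℂ) * ((j n).2 : ℂ))) * w n k) *
                starRingEnd ℂ (v k))) atTop (nhds 0) := by
  obtain ⟨M, hM⟩ := hbdd
  have hw : ∀ n, MemLp (fun k => sW k * w n k) 2 volume := fun n => aux_memH (hmeas n) (hH3 n)
  have hwi : MemLp (fun k => sW k * winf k) 2 volume := aux_memH hmeasinf hH3inf
  have hz : ∀ n, MemLp (fun k => sW k * (w n k - winf k)) 2 volume := by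
    intro n
    refine ((hw n).sub hwi).ae_eq (Eventually.of_forall fun k => ?_)
    simp only [Pi.sub_apply]; ring
  have hsub : ∀ n x, TL (hz n) x = TL (hw n) x - TL hwi x := fun n x =>
    aux_TL_sub (hw n) hwi (hz n) x
  -- uniform bound
  obtain ⟨C, hC⟩ : ∃ C, ∀ n x, ‖TL (hz n) x‖ ≤ C := by
    refine ⟨Real.sqrt M + ‖hwi.toLp _‖, fun n x => ?_⟩
    rw [hsub]
    refine (norm_sub_le _ _).trans ?_
    rw [aux_norm_TL, aux_norm_TL]
    gcongr
    apply Real.le_sqrt_of_sq_le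
    rw [aux_normsq]
    refine le_trans (le_of_eq ?_) (hM n)
    congr 1
    ext k
    rw [norm_mul, mul_pow, aux_sW_norm]
  -- multipliers
  have hm0 : MemLp (fun k : ℝ × ℝ => starRingEnd ℂ (1 : ℂ) / sW k) 2 volume :=
    aux_memM (m := fun _ => 1) measurable_const 1 (fun k => by
      simp only [norm_one]; nlinarith [sq_nonneg k.1, sq_nonneg k.2])
  have hm1 : MemLp (fun k : ℝ × ℝ =>
      starRingEnd ℂ (2 * Real.pi * Complex.I * (k.1 : ℂ)) / sW k) 2 volume :=
    aux_memM (m := fun k : ℝ × ℝ => 2 * Real.pi * Complex.I * (k.1 : ℂ))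
      (by fun_prop) ((2 * Real.pi) ^ 2) (fun k => by
      simp only [norm_mul, Complex.norm_real, Complex.norm_I, Real.norm_eq_abs, mul_pow, sq_abs,
        Complex.norm_ofNat]
      have : 0 ≤ (2:ℝ) ^ 2 * Real.pi ^ 2 := by positivity
      nlinarith [mul_nonneg this (sq_nonneg k.2), mul_nonneg this (sq_nonneg k.1)])
  have hm2 : MemLp (fun k : ℝ × ℝ =>
      starRingEnd ℂ (2 * Real.pi * Complex.I * (k.2 : ℂ)) / sW k) 2 volume :=
    aux_memM (m := fun k : ℝ × ℝ => 2 * Real.pi * Complex.I * (k.2 : ℂ))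
      (by fun_prop) ((2 * Real.pi) ^ 2) (fun k => by
      simp only [norm_mul, Complex.norm_real, Complex.norm_I, Real.norm_eq_abs, mul_pow, sq_abs,
        Complex.norm_ofNat]
      have : 0 ≤ (2:ℝ) ^ 2 * Real.pi ^ 2 := by positivity
      nlinarith [mul_nonneg this (sq_nonneg k.2), mul_nonneg this (sq_nonneg k.1)])
  let F : ℕ → ℝ × ℝ → ℝ := fun n x =>
    (‖∫ k : ℝ × ℝ, fchar x k * (w n k - winf k)‖ +
      ‖∫ k : ℝ × ℝ, (2 * Real.pi * Complex.I * (k.1 : ℂ)) * fchar x k * (w n k - winf k)‖ +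
      ‖∫ k : ℝ × ℝ, (2 * Real.pi * Complex.I * (k.2 : ℂ)) * fchar x k * (w n k - winf k)‖)
  have hWF : ∀ n, W1inftyNorm (fun k => w n k - winf k) = ⨆ x, F n x := fun n => rfl
  have hF0 : ∀ n x, 0 ≤ F n x := fun n x => by positivity
  have hi0 : ∀ n x y, ∫ k : ℝ × ℝ, fchar x k * (w n k - winf k)
      = inner ℂ (TL hm0 (-y)) (TL (hz n) (x - y)) := by
    intro n x y
    rw [← aux_pair_M hm0 (hz n) x y]
    simp only [one_mul]
  have hFe : ∀ n x y, F n x = ‖inner ℂ (TL hm0 (-y)) (TL (hz n) (x - y))‖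
      + ‖inner ℂ (TL hm1 (-y)) (TL (hz n) (x - y))‖
      + ‖inner ℂ (TL hm2 (-y)) (TL (hz n) (x - y))‖ := by
    intro n x y
    rw [← hi0, ← aux_pair_M hm1 (hz n) x y, ← aux_pair_M hm2 (hz n) x y]
  have hbd : ∀ n, BddAbove (Set.range (F n)) := by
    intro n
    refine ⟨‖TL hm0 0‖ * C + ‖TL hm1 0‖ * C + ‖TL hm2 0‖ * C, ?_⟩
    rintro _ ⟨x, rfl⟩
    rw [hFe n x 0, neg_zero]
    gcongr <;> refine (norm_inner_le_norm _ _).trans ?_ <;> gcongr <;> exact hC _ _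
  -- reformulation of the right-hand side
  have hexp : ∀ (i : ℤ × ℤ) (k : ℝ × ℝ), Complex.exp (-(2 * Real.pi * Complex.I) *
      ((k.1 : ℂ) * (i.1 : ℂ) + (k.2 : ℂ) * (i.2 : ℂ))) = fchar (-((i.1 : ℝ), (i.2 : ℝ))) k := by
    intro i k
    rw [fchar]
    congr 1
    simp only [Prod.fst_neg, Prod.snd_neg, Complex.ofReal_neg, Complex.ofReal_intCast]
    ring
  have hRHS : ∀ j : ℕ → ℤ × ℤ, Tendsto (fun n => |(j n).1| + |(j n).2|) atTop atTop →
      ∀ (v : ℝ × ℝ → ℂ) (hv : MemLp (fun k => sW k * v k) 2 volume),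
      (Tendsto (fun n => ∫ k : ℝ × ℝ, (H3weight k : ℂ) *
              ((Complex.exp (-(2 * Real.pi * Complex.I) *
                  ((k.1 : ℂ) * ((j n).1 : ℂ) + (k.2 : ℂ) * ((j n).2 : ℂ))) * w n k) *
                starRingEnd ℂ (v k))) atTop (nhds 0) ↔
        Tendsto (fun n => inner ℂ (TL hv 0) (TL (hz n) (-(((j n).1 : ℝ), ((j n).2 : ℝ)))))
          atTop (nhds 0)) := by
    intro j hj v hv
    have hRL : Tendsto (fun n => inner ℂ (TL hv 0) (TL hwi (-(((j n).1 : ℝ), ((j n).2 : ℝ)))))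
        atTop (nhds 0) := by
      simp_rw [aux_inner_TL, sub_zero]
      exact aux_RL _ j hj
    simp_rw [hexp, aux_pair (hw _) hv, hsub, inner_sub_right]
    constructor
    · intro h; simpa using h.sub hRL
    · intro h; simpa using h.add hRL
  constructor
  · intro h j hj v hvm hvi
    rw [hRHS j hj v (aux_memH hvm hvi)]
    refine aux_weak_dense (fun y => TL hm0 y)
      (fun V hV => aux_dense hm0 (fun k => by simpa using aux_sW_ne k) V hV) _ C
      (fun n => hC n _) (fun y => ?_) _
    refine squeeze_zero_norm (fun n => ?_) h
    set J : ℝ × ℝ := -(((j n).1 : ℝ), ((j n).2 : ℝ))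
    have e := hi0 n (J - y) (-y)
    rw [neg_neg, sub_neg_eq_add, sub_add_cancel] at e
    rw [← e, hWF]
    refine le_trans ?_ (le_ciSup (hbd n) (J - y))
    simp only [F]
    rw [add_assoc]
    exact le_add_of_nonneg_right (by positivity)
  · intro h
    -- weak convergence of `z n` along arbitrary integer translates
    have hV : ∀ V, Tendsto (fun n => inner ℂ V (TL (hz n) 0)) atTop (nhds 0) := by
      intro V
      obtain ⟨v, hvm, hvi, hv, rfl⟩ := aux_exists_v V
      have := hweak v hvm hvi
      have e0 : ∀ f : ℝ × ℝ → ℂ, ∫ k, (H3weight k : ℂ) * (f k * starRingEnd ℂ (v k))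
          = ∫ k, (H3weight k : ℂ) * ((fchar 0 k * f k) * starRingEnd ℂ (v k)) := by
        intro f; simp [fchar]
      rw [e0 winf, aux_pair hwi hv] at this
      have e1 : ∀ n, ∫ k, (H3weight k : ℂ) * (w n k * starRingEnd ℂ (v k))
          = inner ℂ (TL hv 0) (TL (hw n) 0) := fun n => by rw [e0 (w n), aux_pair (hw n) hv]
      simp_rw [e1] at this
      simp_rw [hsub, inner_sub_right]
      simpa using this.sub_const (inner ℂ (TL hv 0) (TL hwi 0))
    have hall : ∀ (j : ℕ → ℤ × ℤ) (V), Tendsto (fun n =>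
        inner ℂ V (TL (hz n) (-(((j n).1 : ℝ), ((j n).2 : ℝ))))) atTop (nhds 0) := by
      intro j V
      obtain ⟨v, hvm, hvi, hv, rfl⟩ := aux_exists_v V
      refine aux_comb (fun n i => inner ℂ (TL hv 0) (TL (hz n) (-((i.1 : ℝ), (i.2 : ℝ))))) ?_ ?_ j
      · intro j hj
        exact (hRHS j hj v hv).1 (h j hj v hvm hvi)
      · intro i
        simp_rw [← aux_shift]
        exact hV _
    have hx : ∀ n : ℕ, ∃ x, (⨆ x, F n x) - 1 / ((n : ℝ) + 1) < F n x := by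
      intro n
      apply exists_lt_of_lt_ciSup
      have : (0 : ℝ) < 1 / ((n : ℝ) + 1) := by positivity
      linarith
    choose x hx using hx
    let j : ℕ → ℤ × ℤ := fun n => (-⌊(x n).1⌋, -⌊(x n).2⌋)
    let y : ℕ → ℝ × ℝ := fun n => (Int.fract (x n).1, Int.fract (x n).2)
    have hxy : ∀ n, x n - y n = -(((j n).1 : ℝ), ((j n).2 : ℝ)) := by
      intro n
      ext <;> simp [j, y]
    have hcpt : IsCompact (Set.Icc (0 : ℝ) 1 ×ˢ Set.Icc (0 : ℝ) 1) := isCompact_Icc.prod isCompact_Icc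
    have hlim : ∀ (g : ℝ × ℝ → ℂ) (hg : MemLp g 2 volume),
        Tendsto (fun n => ‖inner ℂ (TL hg (-y n)) (TL (hz n) (x n - y n))‖) atTop (nhds 0) := by
      intro g hg
      rw [← tendsto_zero_iff_norm_tendsto_zero]
      refine aux_weak_compact _ C (fun n => hC n _) ?_ _
        (hcpt.image ((aux_cont_TL hg).comp continuous_neg)) _ ?_
      · intro V
        simp_rw [hxy]
        exact hall j V
      · intro n
        exact ⟨y n, ⟨⟨Int.fract_nonneg _, (Int.fract_lt_one _).le⟩,
          ⟨Int.fract_nonneg _, (Int.fract_lt_one _).le⟩⟩, rfl⟩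
    have hFlim : Tendsto (fun n => F n (x n) + 1 / ((n : ℝ) + 1)) atTop (nhds 0) := by
      have e : (fun n => F n (x n) + 1 / ((n : ℝ) + 1)) = _ :=
        funext fun n => by rw [hFe n (x n) (y n)]
      rw [e]
      simpa using (((hlim _ hm0).add (hlim _ hm1)).add (hlim _ hm2)).add
        (tendsto_one_div_add_atTop_nhds_zero_nat (𝕜 := ℝ))
    refine squeeze_zero (fun n => ?_) (fun n => ?_) hFlim
    · rw [hWF]; exact Real.iSup_nonneg (hF0 n)
    · rw [hWF]; linarith [hx n]
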